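/- Let (u, ϱ) be a smooth solution on [0,∞) of the perturbation system with no-slip boundary condition, with 0 < α₁ ≤ ϱ₀ + ρ_s ≤ α₂ < ∞, initial data (u₀, ϱ₀) ∈ H²(Ω) × L^∞(Ω), and f ∈ W^{2,∞}(Ω). Then for any γ > 0 and β ∈ ℝ there exist constants I₁, I₂ such that, as t → ∞, ∫_Ω ϱ(t) f dx → I₁ and ‖ϱ(t)+ρ_s+γf−β‖_{L²(Ω)}² → I₂, where the limits satisfy: I₁ ≤ ½‖√(ϱ₀+ρ_s) u₀‖_{L²}² + ∫_Ω ϱ₀ f dx; 0 ≤ I₂ ≤ γ‖√(ϱ₀+ρ_s) u₀‖_{L²}² + ‖ϱ₀+ρ_s+γf−β‖_{L²}²; and ‖ϱ₀+ρ_s+γf−β‖_{L²}² − I₂ = 2γ(∫_Ω ϱ₀ f dx − I₁). -/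

import Mathlib

/-!
Write `ρ = ϱ + ρ_s` and `K = ½ ∫ ρ |u|²`. Since `u` is divergence-free and vanishes on `∂Ω`, the
transport equation gives `d/dt ∫ H(ρ) w = ∫ H(ρ) u · ∇w` (`hasDerivAt_density`). Three consequences
are used:

* `α₁ ≤ ρ ≤ α₂` persists (`density_bounds`);
* `∫ ρ²` and `∫ ρ` are conserved, so `‖ρ + γ f - β‖² - 2 γ ∫ ρ f` is constant in time, which gives
  the relation between `I₁` and `I₂` and reduces the claim to the convergence of `∫ ρ f`;
* `d/dt ∫ ρ f = ∫ ρ u · ∇f`.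

The momentum equation gives `K' = -ν ‖∇u‖² - ∫ ρ u · ∇f` (`hasDerivAt_kinetic`), where the
hydrostatic balance allows `ϱ` to be replaced by `ρ` in the force. Hence `E = K + ∫ ρ f` satisfies
`E' = -ν ‖∇u‖² ≤ -c K` by the Poincaré inequality (`poincare`). As `E` is bounded below and `K'` is
bounded above, `K → 0` and `E` converges (`tendsto_zero_of_dissipation`), so `∫ ρ f` converges to the
limit of `E`, which is at most `E 0`.

All spatial integrations by parts rest on `integral_fderiv_eq_zero`: a `C¹` function vanishing on
`∂Ω` has derivatives of zero mean over `Ω`. It uses that `∂Ω` is null (`level_null`).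
-/

open MeasureTheory Real Filter Topology Set
open scoped RealInnerProductSpace

noncomputable section

/-- The plane `ℝ²`. -/
abbrev E2 := EuclideanSpace ℝ (Fin 2)

/-- Divergence of a vector field on `ℝ²`. -/
def vdiv (u : E2 → E2) (x : E2) : ℝ :=
  ∑ i : Fin 2, fderiv ℝ u x (EuclideanSpace.single i 1) i

/-- Componentwise Laplacian of a vector field on `ℝ²`. -/
def vlap (u : E2 → E2) (x : E2) : E2 :=
  ∑ j : Fin 2, fderiv ℝ (fun y => fderiv ℝ u y (EuclideanSpace.single j 1)) x
    (EuclideanSpace.single j 1)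

/-- `Ω` is a bounded domain in `ℝ²` with smooth boundary. -/
def SmoothBoundedDomain (Ω : Set E2) : Prop :=
  IsOpen Ω ∧ Bornology.IsBounded Ω ∧ Ω.Nonempty ∧
    ∃ φ : E2 → ℝ, ContDiff ℝ (⊤ : ℕ∞) φ ∧ Ω = {x | φ x < 0} ∧
      ∀ x ∈ frontier Ω, fderiv ℝ φ x ≠ 0

/-- Membership in the Sobolev space `H^k(Ω)` (square-integrable derivatives up to order `k`). -/
def MemHk {F : Type*} [NormedAddCommGroup F] [NormedSpace ℝ F]
    (k : ℕ) (Ω : Set E2) (g : E2 → F) : Prop :=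
  ∀ j : ℕ, j ≤ k → IntegrableOn (fun x => ‖iteratedFDeriv ℝ j g x‖ ^ 2) Ω

/-- Joint smoothness of a solution `(u, ϱ, P)` of the system. -/
def SmoothSol (u : ℝ → E2 → E2) (ϱ P : ℝ → E2 → ℝ) : Prop :=
  ContDiff ℝ (⊤ : ℕ∞) (fun p : ℝ × E2 => u p.1 p.2) ∧
    ContDiff ℝ (⊤ : ℕ∞) (fun p : ℝ × E2 => ϱ p.1 p.2) ∧
    ContDiff ℝ (⊤ : ℕ∞) (fun p : ℝ × E2 => P p.1 p.2)

/-- `ρ_s` is a steady hydrostatic density profile: there is a pressure `p_s` with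
`∇p_s = −ρ_s ∇f` on `Ω`. -/
def Hydrostatic (Ω : Set E2) (f ρs : E2 → ℝ) : Prop :=
  ∃ ps : E2 → ℝ, ContDiff ℝ (⊤ : ℕ∞) ps ∧ ∀ x ∈ Ω, gradient ps x = -(ρs x • gradient f x)

/-- The 2D inhomogeneous incompressible Navier–Stokes perturbation system on `Ω`:
`(ϱ+ρ_s) ∂_t u + (ϱ+ρ_s)(u·∇)u = ν Δu − ∇P − ϱ ∇f`, `∂_t ϱ + u·∇ϱ + u·∇ρ_s = 0`,
`∇·u = 0`, with the no-slip boundary condition `u|_{∂Ω} = 0`. -/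
def PerturbationSystem (Ω : Set E2) (ν : ℝ) (f ρs : E2 → ℝ)
    (u : ℝ → E2 → E2) (ϱ P : ℝ → E2 → ℝ) : Prop :=
  (∀ t ∈ Ici (0:ℝ), ∀ x ∈ Ω,
    (ϱ t x + ρs x) • deriv (fun s => u s x) t
        + (ϱ t x + ρs x) • fderiv ℝ (u t) x (u t x)
      = ν • vlap (u t) x - gradient (P t) x - ϱ t x • gradient f x) ∧
  (∀ t ∈ Ici (0:ℝ), ∀ x ∈ Ω,
    deriv (fun s => ϱ s x) t + fderiv ℝ (ϱ t) x (u t x) + fderiv ℝ ρs x (u t x) = 0) ∧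
  (∀ t ∈ Ici (0:ℝ), ∀ x ∈ Ω, vdiv (u t) x = 0) ∧
  (∀ t ∈ Ici (0:ℝ), ∀ x ∈ frontier Ω, u t x = 0)

/-- `∇f ∈ W^{1,∞}(Ω)`. -/
def GradfW1inf (Ω : Set E2) (f : E2 → ℝ) : Prop :=
  ∃ M : ℝ, ∀ x ∈ Ω, ‖gradient f x‖ ≤ M ∧ ‖iteratedFDeriv ℝ 2 f x‖ ≤ M

/-- `f ∈ W^{2,∞}(Ω)`. -/
def fW2inf (Ω : Set E2) (f : E2 → ℝ) : Prop :=
  ∃ M : ℝ, ∀ x ∈ Ω, |f x| ≤ M ∧ ‖gradient f x‖ ≤ M ∧ ‖iteratedFDeriv ℝ 2 f x‖ ≤ M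

/-! ### Integration by parts on `Ω` -/

/-- A set on which `φ` vanishes but `fderiv φ` does not is null: at a Lebesgue density point of the
set, the derivative of a function vanishing on it must be zero. The density-point argument in
Mathlib is for self-maps, hence the auxiliary map `x ↦ φ x • e`. -/
lemma level_null (φ : E2 → ℝ) (hφ : ContDiff ℝ 1 φ) (S : Set E2) (hS : MeasurableSet S)
    (h0 : ∀ x ∈ S, φ x = 0) (h1 : ∀ x ∈ S, fderiv ℝ φ x ≠ 0) : volume S = 0 := by
  set e : E2 := EuclideanSpace.single 0 1 with he
  have hd : Differentiable ℝ φ := hφ.differentiable (by simp)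
  have happ : ApproximatesLinearOn (fun x => φ x • e) (0 : E2 →L[ℝ] E2) S 0 := by
    intro x hx y hy
    simp [h0 x hx, h0 y hy]
  have := happ.norm_fderiv_sub_le volume hS (fun x => (fderiv ℝ φ x).smulRight e)
    (fun x _ => ((hd x).hasFDerivAt.smul_const e).hasFDerivWithinAt)
  rw [ae_restrict_iff' hS] at this
  refine measure_mono_null ?_ (ae_iff.1 this)
  intro x hx
  simp only [mem_ofPred_eq, Classical.not_imp]
  refine ⟨hx, ?_⟩
  intro hle
  have h2 : fderiv ℝ φ x = 0 ∨ e = 0 := by simpa using hle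
  exact h2.elim (h1 x hx) (by simp [he])

lemma exists_frontier_segment {Ω : Set E2} (hΩ : IsOpen Ω) {x y : E2} (hx : x ∈ Ω) (hy : y ∉ Ω) :
    ∃ z ∈ frontier Ω, ‖x - z‖ ≤ ‖x - y‖ := by
  by_contra! hcon
  have hsub : segment ℝ x y ⊆ Ω ∪ (closure Ω)ᶜ := by
    intro z hz
    by_cases h : z ∈ closure Ω
    · left
      by_contra hn
      have hf : z ∈ frontier Ω := by rw [hΩ.frontier_eq]; exact ⟨h, hn⟩
      have := hcon z hf
      obtain ⟨a, b, ha, hb, hab, rfl⟩ := hz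
      have e : x - (a • x + b • y) = b • (x - y) := by
        have : a = 1 - b := by linarith
        subst this; module
      rw [e, norm_smul, Real.norm_of_nonneg hb] at this
      nlinarith [norm_nonneg (x - y)]
    · exact Or.inr h
  have hp : IsPreconnected (segment ℝ x y) := (convex_segment x y).isPreconnected
  obtain ⟨z, hz⟩ := hp Ω (closure Ω)ᶜ hΩ isClosed_closure.isOpen_compl hsub
    ⟨x, left_mem_segment ℝ x y, hx⟩
    ⟨y, right_mem_segment ℝ x y, (hsub (right_mem_segment ℝ x y)).resolve_left hy⟩
  exact hz.2.2 (subset_closure hz.2.1)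

/-- The divergence theorem for fields vanishing on the boundary. The extension of `g` by zero outside
`Ω` is Lipschitz, so it may be integrated by parts against a cut-off equal to `1` on `Ω`. -/
lemma integral_fderiv_eq_zero {Ω : Set E2} (hΩ : IsOpen Ω) (hb : Bornology.IsBounded Ω)
    (hn : volume (frontier Ω) = 0) {g : E2 → ℝ} (hg : ContDiff ℝ 1 g)
    (hz : ∀ x ∈ frontier Ω, g x = 0) (v : E2) : ∫ x in Ω, fderiv ℝ g x v = 0 := by
  obtain ⟨R, hR0, hR⟩ := hb.subset_ball_lt 0 0
  let χ : ContDiffBump (0 : E2) := ⟨R, R + 1, hR0, by linarith⟩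
  have hχ1 : ∀ x ∈ Metric.closedBall (0 : E2) R, χ x = 1 := fun x hx =>
    χ.one_of_mem_closedBall hx
  have hcl : closure Ω ⊆ Metric.closedBall (0 : E2) R :=
    closure_minimal (hR.trans Metric.ball_subset_closedBall) Metric.isClosed_closedBall
  obtain ⟨D, hD⟩ := ContDiff.lipschitzWith_of_hasCompactSupport (𝕂 := ℝ) (n := 1)
    χ.hasCompactSupport χ.contDiff (by simp)
  obtain ⟨C, hC⟩ := ContDiff.lipschitzWith_of_hasCompactSupport (𝕂 := ℝ) (n := 1)
    (f := fun x => χ x * g x) (χ.hasCompactSupport.mul_right) (χ.contDiff.mul hg) (by simp)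
  have hC' : ∀ x ∈ closure Ω, ∀ y ∈ closure Ω, |g x - g y| ≤ C * ‖x - y‖ := by
    intro x hx y hy
    have := hC.dist_le_mul x y
    simpa [hχ1 x (hcl hx), hχ1 y (hcl hy), dist_eq_norm] using this
  set G : E2 → ℝ := Ω.indicator g with hG
  have hGin : ∀ x ∈ Ω, G x = g x := fun x hx => indicator_of_mem hx g
  have hGout : ∀ x ∉ Ω, G x = 0 := fun x hx => indicator_of_notMem hx g
  have key : ∀ x ∈ Ω, ∀ y ∉ Ω, |g x| ≤ C * ‖x - y‖ := by
    intro x hx y hy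
    obtain ⟨z, hzf, hzle⟩ := exists_frontier_segment hΩ hx hy
    have := hC' x (subset_closure hx) z (frontier_subset_closure hzf)
    rw [hz z hzf, sub_zero] at this
    exact this.trans (mul_le_mul_of_nonneg_left hzle C.2)
  have hGL : LipschitzWith C G := by
    refine LipschitzWith.of_dist_le_mul fun x y => ?_
    rw [dist_eq_norm, dist_eq_norm, Real.norm_eq_abs]
    by_cases hx : x ∈ Ω <;> by_cases hy : y ∈ Ω
    · rw [hGin x hx, hGin y hy]; exact hC' x (subset_closure hx) y (subset_closure hy)
    · rw [hGin x hx, hGout y hy, sub_zero]; exact key x hx y hy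
    · rw [hGin y hy, hGout x hx, zero_sub, abs_neg, norm_sub_rev]; exact key y hy x hx
    · rw [hGout x hx, hGout y hy]; simp; positivity
  have main := hGL.integral_lineDeriv_mul_eq (μ := volume) hD χ.hasCompactSupport v
  have hR0' : ∫ x, lineDeriv ℝ χ x (-v) * G x = 0 := by
    rw [← integral_zero E2 ℝ]
    congr 1
    ext x
    by_cases hx : x ∈ Ω
    · have : (χ : E2 → ℝ) =ᶠ[𝓝 x] fun _ => 1 := by
        filter_upwards [Metric.isOpen_ball.mem_nhds (hR hx)] with y hy
        exact hχ1 y (Metric.ball_subset_closedBall hy)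
      rw [this.lineDeriv_eq]
      simp [lineDeriv]
    · simp [hGout x hx]
  rw [hR0'] at main
  rw [← main, ← integral_indicator hΩ.measurableSet]
  refine integral_congr_ae ?_
  filter_upwards [measure_eq_zero_iff_ae_notMem.1 hn] with x hx
  by_cases hxΩ : x ∈ Ω
  · rw [indicator_of_mem hxΩ, hχ1 x (hcl (subset_closure hxΩ)), mul_one]
    have : G =ᶠ[𝓝 x] g := by
      filter_upwards [hΩ.mem_nhds hxΩ] with y hy using hGin y hy
    rw [this.lineDeriv_eq, ((hg.differentiable (by simp)) x).lineDeriv_eq_fderiv]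
  · rw [indicator_of_notMem hxΩ]
    have hxc : x ∈ (closure Ω)ᶜ := fun h => hx (by rw [hΩ.frontier_eq]; exact ⟨h, hxΩ⟩)
    have : G =ᶠ[𝓝 x] fun _ => 0 := by
      filter_upwards [isClosed_closure.isOpen_compl.mem_nhds hxc] with y hy
      exact hGout y (fun h => hy (subset_closure h))
    rw [this.lineDeriv_eq]
    simp [lineDeriv]

/-! ### Differentiation under the integral sign -/

lemma Continuous.integrableOn_of_isBounded {Ω : Set E2} (hb : Bornology.IsBounded Ω)
    {g : E2 → ℝ} (hg : Continuous g) : IntegrableOn g Ω :=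
  (hg.continuousOn.integrableOn_compact hb.isCompact_closure).mono_set subset_closure

lemma hasDerivAt_integral_smooth {Ω : Set E2} (hΩ : IsOpen Ω) (hb : Bornology.IsBounded Ω)
    {h : ℝ → E2 → ℝ} (hh : ContDiff ℝ 1 (fun p : ℝ × E2 => h p.1 p.2)) (t : ℝ) :
    HasDerivAt (fun t => ∫ x in Ω, h t x) (∫ x in Ω, deriv (fun s => h s x) t) t := by
  have hd : ∀ s x, HasDerivAt (fun s => h s x)
      (fderiv ℝ (fun p : ℝ × E2 => h p.1 p.2) (s, x) (1, 0)) s := by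
    intro s x
    have h1 := ((hh.differentiable (by simp)) (s, x)).hasFDerivAt
    have h2 : HasDerivAt (fun s : ℝ => (s, x)) ((1 : ℝ), (0 : E2)) s :=
      (hasDerivAt_id s).prodMk (hasDerivAt_const s x)
    exact h1.comp_hasDerivAt s h2
  have hc : Continuous (fun p : ℝ × E2 => fderiv ℝ (fun p : ℝ × E2 => h p.1 p.2) p (1, 0)) :=
    (hh.continuous_fderiv (by simp)).clm_apply continuous_const
  obtain ⟨B, hB⟩ := ((isCompact_Icc (a := t - 1) (b := t + 1)).prod
    hb.isCompact_closure).exists_bound_of_continuousOn hc.continuousOn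
  have hcs : ∀ s, Continuous (h s) := fun s => hh.continuous.comp (by fun_prop : Continuous fun x : E2 => (s, x))
  have := (hasDerivAt_integral_of_dominated_loc_of_deriv_le (μ := volume.restrict Ω)
    (F := h) (F' := fun s x => fderiv ℝ (fun p : ℝ × E2 => h p.1 p.2) (s, x) (1, 0))
    (bound := fun _ => B) (Icc_mem_nhds (by linarith : t - 1 < t) (by linarith : t < t + 1))
    (Eventually.of_forall fun s => (hcs s).aestronglyMeasurable)
    ((hcs t).integrableOn_of_isBounded hb)
    (hc.comp (by fun_prop : Continuous fun x : E2 => (t, x))).aestronglyMeasurable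
    (by
      rw [ae_restrict_iff' hΩ.measurableSet]
      exact Eventually.of_forall fun x hx s hs => hB (s, x) ⟨hs, subset_closure hx⟩)
    ((continuous_const).integrableOn_of_isBounded hb)
    (Eventually.of_forall fun x s _ => hd s x)).2
  simpa only [(hd t _).deriv] using this

/-! ### Decay of a dissipated quantity -/

/-- If `E` is bounded below with `E' ≤ -c K`, `K ≥ 0`, and `K' ≤ C`, then `K → 0` and `E` converges.
A one-sided bound on `K'` suffices: if `K t ≥ ε`, then `K ≥ ε / 2` on `[t - ε / (2 C), t]`, so `E`
drops by a fixed amount on that interval, which happens only for bounded `t`. -/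
lemma tendsto_zero_of_dissipation {K E K' E' : ℝ → ℝ} {c C m : ℝ} (hc : 0 < c) (hC : 0 < C)
    (hK0 : ∀ t, 0 ≤ t → 0 ≤ K t) (hKd : ∀ t, 0 ≤ t → HasDerivAt K (K' t) t)
    (hEd : ∀ t, 0 ≤ t → HasDerivAt E (E' t) t)
    (hK' : ∀ t, 0 ≤ t → K' t ≤ C) (hE' : ∀ t, 0 ≤ t → E' t ≤ -(c * K t))
    (hm : ∀ t, 0 ≤ t → m ≤ E t) :
    Tendsto K atTop (𝓝 0) ∧ ∃ L, L ≤ E 0 ∧ Tendsto E atTop (𝓝 L) := by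
  have hmv : ∀ (F F' : ℝ → ℝ) (B : ℝ) (s t : ℝ), 0 ≤ s → s ≤ t →
      (∀ r, 0 ≤ r → HasDerivAt F (F' r) r) → (∀ r ∈ Icc s t, F' r ≤ B) →
      F t - F s ≤ B * (t - s) := by
    intro F F' B s t hs hst hF hB
    refine (convex_Icc s t).image_sub_le_mul_sub_of_deriv_le
      (fun r hr => (hF r (hs.trans hr.1)).continuousAt.continuousWithinAt)
      (fun r hr => ?_) (fun r hr => ?_) s ⟨le_rfl, hst⟩ t ⟨hst, le_rfl⟩ hst
    · exact (hF r (hs.trans (interior_subset hr).1)).differentiableAt.differentiableWithinAt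
    · rw [(hF r (hs.trans (interior_subset hr).1)).deriv]
      exact hB r (interior_subset hr)
  have hanti : ∀ s t, 0 ≤ s → s ≤ t → E t ≤ E s := by
    intro s t hs hst
    have := hmv E E' 0 s t hs hst hEd (fun r hr => by
      have h0 := hs.trans hr.1
      have := mul_nonneg hc.le (hK0 r h0)
      linarith [hE' r h0])
    linarith
  obtain ⟨L, hL⟩ : ∃ L, Tendsto E atTop (𝓝 L) := by
    have h1 : Antitone fun t => E (max t 0) := fun a b hab =>
      hanti _ _ (le_max_right _ _) (max_le_max_right 0 hab)
    have h2 := tendsto_atTop_ciInf h1 ⟨m, by rintro _ ⟨t, rfl⟩; exact hm _ (le_max_right _ _)⟩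
    refine ⟨_, h2.congr' ?_⟩
    filter_upwards [eventually_ge_atTop 0] with t ht
    rw [max_eq_left ht]
  refine ⟨?_, L, ?_, hL⟩
  · rw [Metric.tendsto_atTop]
    intro ε hε
    set δ := ε / (2 * C) with hδ
    have hδ0 : 0 < δ := by positivity
    have hCδ : C * δ = ε / 2 := by rw [hδ]; field_simp
    have hdiff : Tendsto (fun t => E (t - δ) - E t) atTop (𝓝 0) := by
      have := (hL.comp (tendsto_atTop_add_const_right atTop (-δ) tendsto_id)).sub hL
      simpa [Function.comp_def, sub_eq_add_neg] using this
    have hev := hdiff.eventually_lt_const (show 0 < c * δ * (ε / 2) by positivity)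
    obtain ⟨T, hT⟩ := eventually_atTop.1 hev
    refine ⟨max T δ, fun t ht => ?_⟩
    have hTt : T ≤ t := (le_max_left _ _).trans ht
    have hδt : δ ≤ t := (le_max_right _ _).trans ht
    have h0 : 0 ≤ t := hδ0.le.trans hδt
    rw [Real.dist_eq, sub_zero, abs_of_nonneg (hK0 t h0)]
    have hE2 := hmv E E' (-(c * (K t - ε / 2))) (t - δ) t (by linarith) (by linarith) hEd
      (fun r hr => by
        have hr0 : 0 ≤ r := by linarith [hr.1]
        have h1 := hmv K K' C r t hr0 hr.2 hKd (fun q hq => hK' q (hr0.trans hq.1))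
        have h2 : C * (t - r) ≤ C * δ := mul_le_mul_of_nonneg_left (by linarith [hr.1]) hC.le
        have h3 : K t - ε / 2 ≤ K r := by linarith
        have := mul_le_mul_of_nonneg_left h3 hc.le
        linarith [hE' r hr0])
    have hlt := hT t hTt
    by_contra! hcon
    have : c * δ * (ε / 2) ≤ c * δ * (K t - ε / 2) :=
      mul_le_mul_of_nonneg_left (by linarith) (by positivity)
    nlinarith
  · refine le_of_tendsto hL ?_
    filter_upwards [eventually_ge_atTop 0] with t ht using hanti 0 t le_rfl ht

/-! ### Integral identities for vector fields vanishing on the boundary -/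

lemma sum_single (v : E2) : ∑ i : Fin 2, v i • (EuclideanSpace.single i (1 : ℝ) : E2) = v := by
  ext j
  fin_cases j <;> simp

lemma inner_gradient_eq (g : E2 → ℝ) (x v : E2) : ⟪v, gradient g x⟫ = fderiv ℝ g x v := by
  rw [real_inner_comm, gradient, InnerProductSpace.toDual_symm_apply]

/-- `∫_Ω (w · ∇) h = 0` for a divergence-free `w` vanishing on the boundary, since the integrand is
the divergence of `h w`. -/
lemma integral_transport {Ω : Set E2} (hΩ : IsOpen Ω) (hb : Bornology.IsBounded Ω)
    (hn : volume (frontier Ω) = 0) {h : E2 → ℝ} (hh : ContDiff ℝ 1 h) {w : E2 → E2}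
    (hw : ContDiff ℝ 1 w) (hdiv : ∀ x ∈ Ω, vdiv w x = 0) (hz : ∀ x ∈ frontier Ω, w x = 0) :
    ∫ x in Ω, fderiv ℝ h x (w x) = 0 := by
  have hwi : ∀ i : Fin 2, ContDiff ℝ 1 (fun x => w x i) := fun i => by fun_prop
  have h0 : ∀ i : Fin 2, ∫ x in Ω, fderiv ℝ (fun x => h x * w x i) x
      (EuclideanSpace.single i 1) = 0 := fun i =>
    integral_fderiv_eq_zero hΩ hb hn (hh.mul (hwi i)) (fun x hx => by simp [hz x hx]) _
  have hsum : ∫ x in Ω, ∑ i : Fin 2, fderiv ℝ (fun x => h x * w x i) x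
      (EuclideanSpace.single i 1) = 0 := by
    rw [integral_finsetSum _ fun i _ => ?_]
    · simp [h0]
    · exact ((((hh.mul (hwi i)).continuous_fderiv (by simp)).clm_apply
        continuous_const).integrableOn_of_isBounded hb)
  rw [← hsum]
  refine setIntegral_congr_fun hΩ.measurableSet fun x hx => ?_
  have hd := (hh.differentiable (by simp)) x
  have hwd := (hw.differentiable (by simp)) x
  have hcomp : ∀ (i : Fin 2) (v : E2), fderiv ℝ (fun x => w x i) x v = fderiv ℝ w x v i := by
    intro i v
    have := ((EuclideanSpace.proj (𝕜 := ℝ) i : E2 →L[ℝ] ℝ).hasFDerivAt.comp x hwd.hasFDerivAt).fderiv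
    exact congrArg (fun T : E2 →L[ℝ] ℝ => T v) this
  have hterm : ∀ i : Fin 2, fderiv ℝ (fun x => h x * w x i) x (EuclideanSpace.single i 1)
      = w x i * fderiv ℝ h x (EuclideanSpace.single i 1)
        + h x * fderiv ℝ w x (EuclideanSpace.single i 1) i := by
    intro i
    rw [fderiv_fun_mul hd (((hwi i).differentiable (by simp)) x)]
    simp [hcomp]
    ring
  simp only [hterm]
  rw [Finset.sum_add_distrib, ← Finset.mul_sum]
  have hv : ∑ i : Fin 2, fderiv ℝ w x (EuclideanSpace.single i 1) i = 0 := hdiv x hx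
  rw [hv, mul_zero, add_zero]
  conv_lhs => rw [← sum_single (w x)]
  simp

lemma fderiv_inner_self {w : E2 → E2} {x : E2} (hw : DifferentiableAt ℝ w x) (v : E2) :
    fderiv ℝ (fun y => ‖w y‖ ^ 2) x v = 2 * ⟪w x, fderiv ℝ w x v⟫ := by
  rw [hw.hasFDerivAt.norm_sq.fderiv]
  simp

/-- Poincaré inequality, obtained by integrating `∂₀ (x₀ |w|²)` over `Ω`. -/
lemma poincare {Ω : Set E2} (hΩ : IsOpen Ω) (hb : Bornology.IsBounded Ω)
    (hn : volume (frontier Ω) = 0) : ∃ C : ℝ, 0 < C ∧ ∀ w : E2 → E2, ContDiff ℝ 1 w →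
      (∀ x ∈ frontier Ω, w x = 0) → ∫ x in Ω, ‖w x‖ ^ 2 ≤
        C * ∑ j : Fin 2, ∫ x in Ω, ‖fderiv ℝ w x (EuclideanSpace.single j 1)‖ ^ 2 := by
  obtain ⟨R, hR0, hR⟩ := hb.subset_ball_lt 0 0
  refine ⟨4 * R ^ 2, by positivity, fun w hw hz => ?_⟩
  set e : E2 := EuclideanSpace.single 0 1 with he
  have hx0 : ContDiff ℝ 1 (fun x : E2 => x 0) := by fun_prop
  have hw2 : ContDiff ℝ 1 (fun x => ‖w x‖ ^ 2) := hw.norm_sq ℝ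
  have hDc : ∀ v, Continuous fun x => fderiv ℝ w x v := fun v =>
    (hw.continuous_fderiv (by simp)).clm_apply continuous_const
  have h0 := integral_fderiv_eq_zero hΩ hb hn (hx0.mul hw2)
    (fun x hx => by simp [hz x hx]) e
  have hpt : ∀ x, fderiv ℝ (fun x : E2 => x 0 * ‖w x‖ ^ 2) x e
      = ‖w x‖ ^ 2 + 2 * x 0 * ⟪w x, fderiv ℝ w x e⟫ := by
    intro x
    rw [fderiv_fun_mul (hx0.differentiable (by simp) x) (hw2.differentiable (by simp) x)]
    have h1 : fderiv ℝ (fun x : E2 => x 0) x e = 1 := by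
      have := (EuclideanSpace.proj (𝕜 := ℝ) (0 : Fin 2) : E2 →L[ℝ] ℝ).hasFDerivAt (x := x) |>.fderiv
      refine (congrArg (fun T : E2 →L[ℝ] ℝ => T e) this).trans ?_
      simp [he]
    simp only [add_apply, smul_apply, smul_eq_mul, h1,
      fderiv_inner_self (hw.differentiable (by simp) x)]
    ring
  have i1 : IntegrableOn (fun x => ‖w x‖ ^ 2) Ω := hw2.continuous.integrableOn_of_isBounded hb
  have i2 : ∀ v, IntegrableOn (fun x => ‖fderiv ℝ w x v‖ ^ 2) Ω := fun v =>
    ((hDc v).norm.pow 2).integrableOn_of_isBounded hb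
  have hle : ∫ x in Ω, ‖w x‖ ^ 2 / 2 - 2 * R ^ 2 * ‖fderiv ℝ w x e‖ ^ 2 ≤ 0 := by
    rw [← h0]
    refine setIntegral_mono_on ((i1.div_const 2).sub ((i2 e).const_mul _)) ?_ hΩ.measurableSet ?_
    · exact (((hx0.mul hw2).continuous_fderiv (by simp)).clm_apply
        continuous_const).integrableOn_of_isBounded hb
    · intro x hx
      refine le_of_le_of_eq ?_ (hpt x).symm
      have hxR : |x 0| ≤ R := by
        have h1 : ‖x 0‖ ≤ ‖x‖ := PiLp.norm_apply_le x 0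
        have h2 := hR hx
        rw [mem_ball_zero_iff] at h2
        exact h1.trans h2.le
      have h3 := abs_real_inner_le_norm (w x) (fderiv ℝ w x e)
      have h4 : |x 0 * ⟪w x, fderiv ℝ w x e⟫| ≤ R * (‖w x‖ * ‖fderiv ℝ w x e‖) := by
        rw [abs_mul]
        exact mul_le_mul hxR h3 (abs_nonneg _) hR0.le
      have h5 := (abs_le.1 h4).1
      nlinarith [sq_nonneg (‖w x‖ - 2 * R * ‖fderiv ℝ w x e‖)]
  rw [integral_sub (i1.div_const 2) ((i2 e).const_mul _), integral_div, integral_const_mul] at hle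
  have hnn : ∀ v, 0 ≤ ∫ x in Ω, ‖fderiv ℝ w x v‖ ^ 2 := fun v =>
    integral_nonneg fun x => by positivity
  rw [Fin.sum_univ_two]
  have := mul_nonneg (by positivity : 0 ≤ 4 * R ^ 2) (hnn (EuclideanSpace.single 1 1))
  linarith

lemma integral_inner_vlap {Ω : Set E2} (hΩ : IsOpen Ω) (hb : Bornology.IsBounded Ω)
    (hn : volume (frontier Ω) = 0) {w : E2 → E2} (hw : ContDiff ℝ 2 w)
    (hz : ∀ x ∈ frontier Ω, w x = 0) : ∫ x in Ω, ⟪w x, vlap w x⟫ =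
      -∑ j : Fin 2, ∫ x in Ω, ‖fderiv ℝ w x (EuclideanSpace.single j 1)‖ ^ 2 := by
  have hw1 : ContDiff ℝ 1 w := hw.of_le (by norm_num)
  have hD : ∀ v, ContDiff ℝ 1 fun x => fderiv ℝ w x v := fun v =>
    (hw.fderiv_right (m := 1) (by norm_num)).clm_apply contDiff_const
  have hin : ∀ v, ContDiff ℝ 1 fun x => ⟪w x, fderiv ℝ w x v⟫ := fun v => hw1.inner ℝ (hD v)
  have h0 : ∀ v, ∫ x in Ω, fderiv ℝ (fun x => ⟪w x, fderiv ℝ w x v⟫) x v = 0 := fun v =>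
    integral_fderiv_eq_zero hΩ hb hn (hin v) (fun x hx => by simp [hz x hx]) v
  have hpt : ∀ v x, fderiv ℝ (fun x => ⟪w x, fderiv ℝ w x v⟫) x v =
      ⟪w x, fderiv ℝ (fun y => fderiv ℝ w y v) x v⟫ + ‖fderiv ℝ w x v‖ ^ 2 := by
    intro v x
    rw [fderiv_inner_apply ℝ (hw1.differentiable (by simp) x) ((hD v).differentiable (by simp) x),
      real_inner_self_eq_norm_sq]
  have i1 : ∀ v, IntegrableOn (fun x => ⟪w x, fderiv ℝ (fun y => fderiv ℝ w y v) x v⟫) Ω := fun v =>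
    (hw1.continuous.inner (((hD v).continuous_fderiv (by simp)).clm_apply
      continuous_const)).integrableOn_of_isBounded hb
  have i2 : ∀ v, IntegrableOn (fun x => ‖fderiv ℝ w x v‖ ^ 2) Ω := fun v =>
    ((hD v).continuous.norm.pow 2).integrableOn_of_isBounded hb
  have h1 : ∀ v, ∫ x in Ω, ⟪w x, fderiv ℝ (fun y => fderiv ℝ w y v) x v⟫ =
      -∫ x in Ω, ‖fderiv ℝ w x v‖ ^ 2 := by
    intro v
    have := h0 v
    simp only [hpt] at this
    rw [integral_add (i1 v) (i2 v)] at this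
    linarith
  simp only [vlap, inner_sum]
  rw [integral_finsetSum _ fun j _ => i1 _, ← Finset.sum_neg_distrib]
  exact Finset.sum_congr rfl fun j _ => h1 _

/-! ### Evolution of the density and of the kinetic energy -/

/-- Weak form of the transport equation, renormalized by `H`, for the total density `ϱ + ρ_s`:
`d/dt ∫ H(ϱ + ρ_s) w = ∫ H(ϱ + ρ_s) (u · ∇) w`. -/
lemma hasDerivAt_density {Ω : Set E2} (hΩ : IsOpen Ω) (hb : Bornology.IsBounded Ω)
    (hn : volume (frontier Ω) = 0) {ρs : E2 → ℝ} (hρs : ContDiff ℝ 1 ρs) {u : ℝ → E2 → E2}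
    {ϱ : ℝ → E2 → ℝ} (hϱ : ContDiff ℝ 1 (fun p : ℝ × E2 => ϱ p.1 p.2)) {t : ℝ}
    (hu : ContDiff ℝ 1 (u t))
    (htr : ∀ x ∈ Ω, deriv (fun s => ϱ s x) t + fderiv ℝ (ϱ t) x (u t x)
      + fderiv ℝ ρs x (u t x) = 0)
    (hdiv : ∀ x ∈ Ω, vdiv (u t) x = 0) (hz : ∀ x ∈ frontier Ω, u t x = 0)
    {H : ℝ → ℝ} (hH : ContDiff ℝ 1 H) {w : E2 → ℝ} (hw : ContDiff ℝ 1 w) :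
    HasDerivAt (fun t => ∫ x in Ω, H (ϱ t x + ρs x) * w x)
      (∫ x in Ω, H (ϱ t x + ρs x) * fderiv ℝ w x (u t x)) t := by
  have hj : ContDiff ℝ 1 (fun p : ℝ × E2 => H (ϱ p.1 p.2 + ρs p.2) * w p.2) := by fun_prop
  have hϱt : ContDiff ℝ 1 (ϱ t) := hϱ.comp (by fun_prop : ContDiff ℝ 1 fun x : E2 => (t, x))
  have hϱx : ∀ x, DifferentiableAt ℝ (fun s => ϱ s x) t := fun x =>
    (hϱ.comp (by fun_prop : ContDiff ℝ 1 fun s : ℝ => (s, x))).differentiable (by simp) t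
  have hρ : ContDiff ℝ 1 (fun x => ϱ t x + ρs x) := hϱt.add hρs
  have hHρ : ContDiff ℝ 1 (fun x => H (ϱ t x + ρs x)) := hH.comp hρ
  have htot := hHρ.mul hw
  have h0 := integral_transport hΩ hb hn htot hu hdiv hz
  have i0 : IntegrableOn (fun x => fderiv ℝ (fun x => H (ϱ t x + ρs x) * w x) x (u t x)) Ω :=
    ((htot.continuous_fderiv (by simp)).clm_apply hu.continuous).integrableOn_of_isBounded hb
  have i1 : IntegrableOn (fun x => H (ϱ t x + ρs x) * fderiv ℝ w x (u t x)) Ω :=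
    (hHρ.continuous.mul ((hw.continuous_fderiv (by simp)).clm_apply
      hu.continuous)).integrableOn_of_isBounded hb
  have hmain := hasDerivAt_integral_smooth (h := fun t x => H (ϱ t x + ρs x) * w x) hΩ hb hj t
  convert hmain using 1
  rw [← sub_zero (∫ x in Ω, H (ϱ t x + ρs x) * fderiv ℝ w x (u t x)), ← h0, ← integral_sub i1 i0]
  refine setIntegral_congr_fun hΩ.measurableSet fun x hx => ?_
  have hHd : HasDerivAt H (deriv H (ϱ t x + ρs x)) (ϱ t x + ρs x) :=
    (hH.differentiable (by simp) _).hasDerivAt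
  have e1 : deriv (fun s => H (ϱ s x + ρs x) * w x) t
      = deriv H (ϱ t x + ρs x) * deriv (fun s => ϱ s x) t * w x :=
    ((hHd.comp t ((hϱx x).hasDerivAt.add_const (ρs x))).mul_const (w x)).deriv
  have e2 : fderiv ℝ (fun x => H (ϱ t x + ρs x) * w x) x (u t x)
      = H (ϱ t x + ρs x) * fderiv ℝ w x (u t x)
        + w x * (deriv H (ϱ t x + ρs x) * (fderiv ℝ (ϱ t) x (u t x) + fderiv ℝ ρs x (u t x))) := by
    have hA := hHd.comp_hasFDerivAt x ((hϱt.differentiable (by simp) x).hasFDerivAt.add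
      (hρs.differentiable (by simp) x).hasFDerivAt)
    have := (hA.mul (hw.differentiable (by simp) x).hasFDerivAt).fderiv
    refine (congrArg (fun T : E2 →L[ℝ] ℝ => T (u t x)) this).trans ?_
    simp
    ring
  simp only [e1]
  refine (congrArg (fun z => H (ϱ t x + ρs x) * fderiv ℝ w x (u t x) - z) e2).trans ?_
  have h3 : deriv (fun s => ϱ s x) t = -(fderiv ℝ (ϱ t) x (u t x) + fderiv ℝ ρs x (u t x)) := by
    linarith [htr x hx]
  rw [h3]
  ring

lemma integral_energy_terms {Ω : Set E2} {g₁ g₂ g₃ g₄ g₅ : E2 → ℝ} {c : ℝ}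
    (h₁ : IntegrableOn g₁ Ω) (h₂ : IntegrableOn g₂ Ω) (h₃ : IntegrableOn g₃ Ω)
    (h₄ : IntegrableOn g₄ Ω) (h₅ : IntegrableOn g₅ Ω) :
    ∫ x in Ω, (-g₁ x + c * g₂ x - 2 * g₃ x - 2 * g₄ x - 2 * g₅ x) =
      -(∫ x in Ω, g₁ x) + c * (∫ x in Ω, g₂ x) - 2 * (∫ x in Ω, g₃ x) - 2 * (∫ x in Ω, g₄ x)
        - 2 * (∫ x in Ω, g₅ x) := by
  have j₂ : IntegrableOn (fun x => -g₁ x + c * g₂ x) Ω := h₁.neg.add (h₂.const_mul c)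
  have j₃ : IntegrableOn (fun x => -g₁ x + c * g₂ x - 2 * g₃ x) Ω := j₂.sub (h₃.const_mul 2)
  have j₄ : IntegrableOn (fun x => -g₁ x + c * g₂ x - 2 * g₃ x - 2 * g₄ x) Ω :=
    j₃.sub (h₄.const_mul 2)
  rw [integral_sub j₄ (h₅.const_mul 2), integral_sub j₃ (h₄.const_mul 2),
    integral_sub j₂ (h₃.const_mul 2), integral_add (f := fun x => -g₁ x) h₁.neg (h₂.const_mul c)]
  simp only [integral_neg, integral_const_mul]

/-- Kinetic energy balance. The forcing appears with the total density `ϱ + ρ_s` rather than `ϱ`: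
the difference `∫ ρ_s u · ∇f = -∫ u · ∇p_s` vanishes by the hydrostatic balance. -/
lemma hasDerivAt_kinetic {Ω : Set E2} (hΩ : IsOpen Ω) (hb : Bornology.IsBounded Ω)
    (hn : volume (frontier Ω) = 0) {ν : ℝ} {f ρs : E2 → ℝ} (hf : ContDiff ℝ (⊤ : ℕ∞) f)
    (hρs : ContDiff ℝ (⊤ : ℕ∞) ρs) (hhyd : Hydrostatic Ω f ρs) {u : ℝ → E2 → E2}
    {ϱ P : ℝ → E2 → ℝ} (hsmooth : SmoothSol u ϱ P) (hsys : PerturbationSystem Ω ν f ρs u ϱ P)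
    {t : ℝ} (ht : 0 ≤ t) :
    HasDerivAt (fun t => (∫ x in Ω, (ϱ t x + ρs x) * ‖u t x‖ ^ 2) / 2)
      (-(ν * ∑ j : Fin 2, ∫ x in Ω, ‖fderiv ℝ (u t) x (EuclideanSpace.single j 1)‖ ^ 2)
        - ∫ x in Ω, (ϱ t x + ρs x) * fderiv ℝ f x (u t x)) t := by
  obtain ⟨hu, hϱ, hP⟩ := hsmooth
  obtain ⟨hmom, htr, hdiv, hz⟩ := hsys
  obtain ⟨ps, hps, hpseq⟩ := hhyd
  have hsl : ContDiff ℝ (⊤ : ℕ∞) fun x : E2 => (t, x) := by fun_prop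
  have hut : ContDiff ℝ (⊤ : ℕ∞) (u t) := hu.comp hsl
  have hϱt : ContDiff ℝ (⊤ : ℕ∞) (ϱ t) := hϱ.comp hsl
  have hPt : ContDiff ℝ (⊤ : ℕ∞) (P t) := hP.comp hsl
  have hle1 : (1 : WithTop ℕ∞) ≤ ((⊤ : ℕ∞) : WithTop ℕ∞) := mod_cast le_top
  have hu1 : ContDiff ℝ 1 (u t) := hut.of_le hle1
  have hu2 : ContDiff ℝ 2 (u t) := contDiff_infty.1 hut 2
  have hf1 : ContDiff ℝ 1 f := hf.of_le hle1
  have hs1 : ContDiff ℝ 1 ρs := hρs.of_le hle1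
  have hϱ1 : ContDiff ℝ 1 (ϱ t) := hϱt.of_le hle1
  have hP1 : ContDiff ℝ 1 (P t) := hPt.of_le hle1
  have hps1 : ContDiff ℝ 1 ps := hps.of_le hle1
  have hρ1 : ContDiff ℝ 1 (fun x => ϱ t x + ρs x) := hϱ1.add hs1
  have hk1 : ContDiff ℝ 1 (fun x => (ϱ t x + ρs x) * ‖u t x‖ ^ 2) := hρ1.mul (hu1.norm_sq ℝ)
  have hj : ContDiff ℝ 1 (fun p : ℝ × E2 => (ϱ p.1 p.2 + ρs p.2) * ‖u p.1 p.2‖ ^ 2) := by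
    have a := hϱ.of_le hle1
    have b := (hu.of_le hle1).norm_sq ℝ
    exact (a.add (hs1.comp contDiff_snd)).mul b
  have hϱx : ∀ x, DifferentiableAt ℝ (fun s => ϱ s x) t := fun x =>
    ((hϱ.of_le hle1).comp (by fun_prop : ContDiff ℝ 1 fun s : ℝ => (s, x))).differentiable
      (by simp) t
  have hux : ∀ x, DifferentiableAt ℝ (fun s => u s x) t := fun x =>
    ((hu.of_le hle1).comp (by fun_prop : ContDiff ℝ 1 fun s : ℝ => (s, x))).differentiable
      (by simp) t
  have htI : t ∈ Ici (0 : ℝ) := ht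
  have T : ∀ {g : E2 → ℝ}, ContDiff ℝ 1 g → ∫ x in Ω, fderiv ℝ g x (u t x) = 0 := fun hg =>
    integral_transport hΩ hb hn hg hu1 (hdiv t htI) (hz t htI)
  have I : ∀ {g : E2 → ℝ}, ContDiff ℝ 1 g → IntegrableOn (fun x => fderiv ℝ g x (u t x)) Ω :=
    fun hg => ((hg.continuous_fderiv (by simp)).clm_apply hu1.continuous).integrableOn_of_isBounded hb
  have IL : IntegrableOn (fun x => ⟪u t x, vlap (u t) x⟫) Ω := by
    refine (hu1.continuous.inner ?_).integrableOn_of_isBounded hb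
    refine continuous_finsetSum _ fun j _ => ?_
    have hD : ContDiff ℝ 1 fun x => fderiv ℝ (u t) x (EuclideanSpace.single j 1) :=
      (hu2.fderiv_right (m := 1) (by norm_num)).clm_apply contDiff_const
    exact (hD.continuous_fderiv (by simp)).clm_apply continuous_const
  have IF : IntegrableOn (fun x => (ϱ t x + ρs x) * fderiv ℝ f x (u t x)) Ω :=
    (hρ1.continuous.mul ((hf1.continuous_fderiv (by simp)).clm_apply
      hu1.continuous)).integrableOn_of_isBounded hb
  have hmain := hasDerivAt_integral_smooth
    (h := fun t x => (ϱ t x + ρs x) * ‖u t x‖ ^ 2) hΩ hb hj t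
  refine (hmain.div_const 2).congr_deriv ?_
  have hpt : ∀ x ∈ Ω, deriv (fun s => (ϱ s x + ρs x) * ‖u s x‖ ^ 2) t =
      -fderiv ℝ (fun x => (ϱ t x + ρs x) * ‖u t x‖ ^ 2) x (u t x)
      + 2 * ν * ⟪u t x, vlap (u t) x⟫ - 2 * fderiv ℝ (P t) x (u t x)
      - 2 * ((ϱ t x + ρs x) * fderiv ℝ f x (u t x)) - 2 * fderiv ℝ ps x (u t x) := by
    intro x hx
    have e1 : deriv (fun s => (ϱ s x + ρs x) * ‖u s x‖ ^ 2) t =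
        deriv (fun s => ϱ s x) t * ‖u t x‖ ^ 2
          + (ϱ t x + ρs x) * (2 * ⟪u t x, deriv (fun s => u s x) t⟫) :=
      (((hϱx x).hasDerivAt.add_const (ρs x)).mul (hux x).hasDerivAt.norm_sq).deriv
    have e2 : fderiv ℝ (fun x => (ϱ t x + ρs x) * ‖u t x‖ ^ 2) x (u t x) =
        (ϱ t x + ρs x) * (2 * ⟪u t x, fderiv ℝ (u t) x (u t x)⟫)
          + ‖u t x‖ ^ 2 * (fderiv ℝ (ϱ t) x (u t x) + fderiv ℝ ρs x (u t x)) := by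
      have hA := ((hϱ1.differentiable (by simp) x).hasFDerivAt.add
        (hs1.differentiable (by simp) x).hasFDerivAt)
      have := (hA.mul (hu1.differentiable (by simp) x).hasFDerivAt.norm_sq).fderiv
      refine (congrArg (fun T : E2 →L[ℝ] ℝ => T (u t x)) this).trans ?_
      simp
      ring
    have e3 := congrArg (fun z => ⟪u t x, z⟫) (hmom t htI x hx)
    simp only [inner_add_right, inner_sub_right, inner_smul_right, inner_gradient_eq] at e3
    have e4 := congrArg (fun z => ⟪u t x, z⟫) (hpseq x hx)
    simp only [inner_neg_right, inner_smul_right, inner_gradient_eq] at e4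
    have e5 := htr t htI x hx
    have e6 : deriv (fun s => ϱ s x) t = -(fderiv ℝ (ϱ t) x (u t x) + fderiv ℝ ρs x (u t x)) := by
      linarith
    rw [e1, e2, e6]
    linear_combination 2 * e3 + 2 * e4
  rw [setIntegral_congr_fun hΩ.measurableSet hpt,
    integral_energy_terms (I hk1) IL (I hP1) IF (I hps1), T hk1, T hP1, T hps1,
    integral_inner_vlap hΩ hb hn hu2 (hz t htI)]
  ring

lemma eq_initial_of_hasDerivAt_zero {F : ℝ → ℝ} (hF : ∀ t, 0 ≤ t → HasDerivAt F 0 t) {t : ℝ}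
    (ht : 0 ≤ t) : F t = F 0 :=
  constant_of_has_deriv_right_zero (a := 0) (b := t)
    (fun r hr => (hF r hr.1).continuousAt.continuousWithinAt)
    (fun r hr => (hF r hr.1).hasDerivWithinAt) t ⟨ht, le_rfl⟩

/-- Maximum principle for the density. With `H` smooth, nonnegative and vanishing exactly on
`[α₁, α₂]`, the integral `∫ H(ϱ + ρ_s)` is conserved, so it stays zero. -/
lemma density_bounds {Ω : Set E2} (hΩ : IsOpen Ω) (hb : Bornology.IsBounded Ω)
    (hn : volume (frontier Ω) = 0) {ρs : E2 → ℝ} (hρs : ContDiff ℝ 1 ρs) {u : ℝ → E2 → E2}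
    {ϱ : ℝ → E2 → ℝ} (hϱ : ContDiff ℝ 1 (fun p : ℝ × E2 => ϱ p.1 p.2))
    (hu : ∀ t, ContDiff ℝ 1 (u t))
    (htr : ∀ t ∈ Ici (0 : ℝ), ∀ x ∈ Ω, deriv (fun s => ϱ s x) t + fderiv ℝ (ϱ t) x (u t x)
      + fderiv ℝ ρs x (u t x) = 0)
    (hdiv : ∀ t ∈ Ici (0 : ℝ), ∀ x ∈ Ω, vdiv (u t) x = 0)
    (hz : ∀ t ∈ Ici (0 : ℝ), ∀ x ∈ frontier Ω, u t x = 0) {α₁ α₂ : ℝ}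
    (hinit : ∀ x ∈ Ω, α₁ ≤ ϱ 0 x + ρs x ∧ ϱ 0 x + ρs x ≤ α₂) {t : ℝ} (ht : 0 ≤ t) :
    ∀ x ∈ Ω, α₁ ≤ ϱ t x + ρs x ∧ ϱ t x + ρs x ≤ α₂ := by
  set H : ℝ → ℝ := fun s => expNegInvGlue (α₁ - s) + expNegInvGlue (s - α₂) with hHdef
  have hg : ContDiff ℝ 1 expNegInvGlue := expNegInvGlue.contDiff (n := 1)
  have hH : ContDiff ℝ 1 H := by
    rw [hHdef]
    exact (hg.comp (by fun_prop)).add (hg.comp (by fun_prop))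
  have hH0 : ∀ s, 0 ≤ H s := fun s => add_nonneg (expNegInvGlue.nonneg _) (expNegInvGlue.nonneg _)
  have hHz : ∀ s, H s = 0 ↔ α₁ ≤ s ∧ s ≤ α₂ := by
    intro s
    rw [hHdef]
    simp only
    rw [add_eq_zero_iff_of_nonneg (expNegInvGlue.nonneg _) (expNegInvGlue.nonneg _),
      expNegInvGlue.zero_iff_nonpos, expNegInvGlue.zero_iff_nonpos, sub_nonpos, sub_nonpos]
  have hcons : ∫ x in Ω, H (ϱ t x + ρs x) * 1 = ∫ x in Ω, H (ϱ 0 x + ρs x) * 1 := by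
    refine eq_initial_of_hasDerivAt_zero (F := fun t => ∫ x in Ω, H (ϱ t x + ρs x) * 1) (fun r hr => ?_) ht
    simpa using hasDerivAt_density hΩ hb hn hρs hϱ (hu r) (htr r hr) (hdiv r hr) (hz r hr) hH
      (contDiff_const (c := (1 : ℝ)))
  have h0 : ∫ x in Ω, H (ϱ 0 x + ρs x) * 1 = 0 := by
    rw [setIntegral_congr_fun hΩ.measurableSet
      (fun x hx => by rw [(hHz _).2 (hinit x hx), zero_mul])]
    exact integral_zero _ _
  rw [h0] at hcons
  simp only [mul_one] at hcons
  have hϱt : Continuous (ϱ t) := hϱ.continuous.comp (by fun_prop : Continuous fun x : E2 => (t, x))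
  have hcont : Continuous fun x => H (ϱ t x + ρs x) :=
    hH.continuous.comp (hϱt.add hρs.continuous)
  have hae := (setIntegral_eq_zero_iff_of_nonneg_ae (Eventually.of_forall fun x => hH0 _)
    (hcont.integrableOn_of_isBounded hb)).1 hcons
  have heq : EqOn (fun x => H (ϱ t x + ρs x)) (fun _ => 0) Ω :=
    Measure.eqOn_open_of_ae_eq hae hΩ hcont.continuousOn continuousOn_const
  exact fun x hx => (hHz _).1 (heq hx)

/-- Convergence of `∫_Ω ϱ f` and of `‖ϱ+ρ_s+γf−β‖_{L²}²` as `t → ∞`,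
with the stated bounds and relation between the limits `I₁` and `I₂`. -/
theorem limits_I1_I2
    (Ω : Set E2) (hΩ : SmoothBoundedDomain Ω)
    (ν : ℝ) (hν : 0 < ν)
    (f ρs : E2 → ℝ) (hf : ContDiff ℝ (⊤ : ℕ∞) f) (hρs : ContDiff ℝ (⊤ : ℕ∞) ρs)
    (hhyd : Hydrostatic Ω f ρs)
    (hfW2 : fW2inf Ω f)
    (u : ℝ → E2 → E2) (ϱ P : ℝ → E2 → ℝ)
    (hsmooth : SmoothSol u ϱ P)
    (hsys : PerturbationSystem Ω ν f ρs u ϱ P)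
    (α₁ α₂ : ℝ) (hα₁ : 0 < α₁)
    (hinit : ∀ x ∈ Ω, α₁ ≤ ϱ 0 x + ρs x ∧ ϱ 0 x + ρs x ≤ α₂)
    -- initial data (u₀, ϱ₀) ∈ H²(Ω) × L^∞(Ω)
    (hu₀ : MemHk 2 Ω (u 0))
    (hϱ₀ : ∃ M : ℝ, ∀ x ∈ Ω, |ϱ 0 x| ≤ M) :
    ∀ γ > (0:ℝ), ∀ β : ℝ, ∃ I₁ I₂ : ℝ,
      Tendsto (fun t => ∫ x in Ω, ϱ t x * f x) atTop (𝓝 I₁) ∧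
      Tendsto (fun t => ∫ x in Ω, (ϱ t x + ρs x + γ * f x - β) ^ 2) atTop (𝓝 I₂) ∧
      I₁ ≤ (∫ x in Ω, (ϱ 0 x + ρs x) * ‖u 0 x‖ ^ 2) / 2 + (∫ x in Ω, ϱ 0 x * f x) ∧
      0 ≤ I₂ ∧
      I₂ ≤ γ * (∫ x in Ω, (ϱ 0 x + ρs x) * ‖u 0 x‖ ^ 2)
            + (∫ x in Ω, (ϱ 0 x + ρs x + γ * f x - β) ^ 2) ∧
      (∫ x in Ω, (ϱ 0 x + ρs x + γ * f x - β) ^ 2) - I₂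
        = 2 * γ * ((∫ x in Ω, ϱ 0 x * f x) - I₁) := by
  intro γ hγ β
  obtain ⟨hΩo, hb, -, φ, hφ, hΩφ, hφ'⟩ := hΩ
  have hle1 : (1 : WithTop ℕ∞) ≤ ((⊤ : ℕ∞) : WithTop ℕ∞) := mod_cast le_top
  have hn : volume (frontier Ω) = 0 := by
    refine level_null φ (hφ.of_le hle1) _ isClosed_frontier.measurableSet (fun x hx => ?_) hφ'
    rw [hΩo.frontier_eq] at hx
    have h1 : closure Ω ⊆ {x | φ x ≤ 0} :=
      closure_minimal (fun y hy => by rw [hΩφ] at hy; exact le_of_lt (show φ y < 0 from hy))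
        (isClosed_le hφ.continuous continuous_const)
    have h2 : ¬ φ x < 0 := fun h => hx.2 (by rw [hΩφ]; exact h)
    exact le_antisymm (h1 hx.1) (not_lt.1 h2)
  have hkin := fun t (ht : 0 ≤ t) => hasDerivAt_kinetic hΩo hb hn hf hρs hhyd hsmooth hsys ht
  obtain ⟨hu, hϱ, -⟩ := hsmooth
  obtain ⟨-, htr, hdiv, hz⟩ := hsys
  have hf1 : ContDiff ℝ 1 f := hf.of_le hle1
  have hs1 : ContDiff ℝ 1 ρs := hρs.of_le hle1
  have hϱ1 := hϱ.of_le hle1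
  have hu1 : ∀ t, ContDiff ℝ 1 (u t) := fun t =>
    (hu.of_le hle1).comp (by fun_prop : ContDiff ℝ 1 fun x : E2 => (t, x))
  have hϱt : ∀ t, Continuous (ϱ t) := fun t =>
    hϱ.continuous.comp (by fun_prop : Continuous fun x : E2 => (t, x))
  have hden := fun t (ht : 0 ≤ t) (H : ℝ → ℝ) (hH : ContDiff ℝ 1 H) (w : E2 → ℝ)
    (hw : ContDiff ℝ 1 w) =>
    hasDerivAt_density hΩo hb hn hs1 hϱ1 (hu1 t) (htr t ht) (hdiv t ht) (hz t ht) hH hw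
  have hbd : ∀ t, 0 ≤ t → ∀ x ∈ Ω, α₁ ≤ ϱ t x + ρs x ∧ ϱ t x + ρs x ≤ α₂ := fun t ht =>
    density_bounds hΩo hb hn hs1 hϱ1 hu1 htr hdiv hz hinit ht
  have II : ∀ {g : E2 → ℝ}, Continuous g → IntegrableOn g Ω := fun hg =>
    hg.integrableOn_of_isBounded hb
  obtain ⟨Cp, hCp, hpoin⟩ := poincare hΩo hb hn
  obtain ⟨M, hM⟩ := hfW2
  -- `M` and `α₂` are replaced by positive upper bounds.
  set M' := max M 1 with hM'
  set a := max α₂ 1 with ha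
  have hM'0 : 0 < M' := lt_max_of_lt_right one_pos
  have ha0 : 0 < a := lt_max_of_lt_right one_pos
  set V : ℝ := ∫ x in Ω, (1 : ℝ) with hV
  have hV0 : 0 ≤ V := integral_nonneg fun _ => zero_le_one
  set K : ℝ → ℝ := fun t => (∫ x in Ω, (ϱ t x + ρs x) * ‖u t x‖ ^ 2) / 2 with hK
  set D : ℝ → ℝ := fun t =>
    ∑ j : Fin 2, ∫ x in Ω, ‖fderiv ℝ (u t) x (EuclideanSpace.single j 1)‖ ^ 2 with hD
  set B : ℝ → ℝ := fun t => ∫ x in Ω, (ϱ t x + ρs x) * f x with hB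
  set W : ℝ → ℝ := fun t => ∫ x in Ω, (ϱ t x + ρs x) * fderiv ℝ f x (u t x) with hW
  have hBd : ∀ t, 0 ≤ t → HasDerivAt B (W t) t := fun t ht => hden t ht id contDiff_id f hf1
  have hEd : ∀ t, 0 ≤ t → HasDerivAt (fun t => K t + B t) (-(ν * D t)) t := fun t ht =>
    ((hkin t ht).add (hBd t ht)).congr_deriv (by simp only [hD, hW]; ring)
  have iu2 : ∀ t, IntegrableOn (fun x => ‖u t x‖ ^ 2) Ω := fun t =>
    II ((hu1 t).continuous.norm.pow 2)
  have iK : ∀ t, IntegrableOn (fun x => (ϱ t x + ρs x) * ‖u t x‖ ^ 2) Ω := fun t =>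
    II (((hϱt t).add hs1.continuous).mul ((hu1 t).continuous.norm.pow 2))
  have hK0 : ∀ t, 0 ≤ t → 0 ≤ K t := fun t ht =>
    div_nonneg (setIntegral_nonneg hΩo.measurableSet fun x hx =>
      mul_nonneg (hα₁.le.trans (hbd t ht x hx).1) (by positivity)) (by norm_num)
  have hD0 : ∀ t, 0 ≤ D t := fun t => Finset.sum_nonneg fun j _ =>
    integral_nonneg fun x => by positivity
  have hKa : ∀ t, 0 ≤ t → K t ≤ a / 2 * ∫ x in Ω, ‖u t x‖ ^ 2 := by
    intro t ht
    have : ∫ x in Ω, (ϱ t x + ρs x) * ‖u t x‖ ^ 2 ≤ ∫ x in Ω, a * ‖u t x‖ ^ 2 :=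
      setIntegral_mono_on (iK t) ((iu2 t).const_mul a) hΩo.measurableSet fun x hx =>
        mul_le_mul_of_nonneg_right ((hbd t ht x hx).2.trans (le_max_left _ _)) (by positivity)
    rw [integral_const_mul] at this
    simp only [hK]
    linarith
  have huK : ∀ t, 0 ≤ t → α₁ * ∫ x in Ω, ‖u t x‖ ^ 2 ≤ 2 * K t := by
    intro t ht
    have : ∫ x in Ω, α₁ * ‖u t x‖ ^ 2 ≤ ∫ x in Ω, (ϱ t x + ρs x) * ‖u t x‖ ^ 2 :=
      setIntegral_mono_on ((iu2 t).const_mul α₁) (iK t) hΩo.measurableSet fun x hx =>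
        mul_le_mul_of_nonneg_right (hbd t ht x hx).1 (by positivity)
    rw [integral_const_mul] at this
    simp only [hK]
    linarith
  have hKD : ∀ t, 0 ≤ t → K t ≤ a / 2 * Cp * D t := by
    intro t ht
    have h1 := hpoin (u t) (hu1 t) (hz t ht)
    have h2 := mul_le_mul_of_nonneg_left h1 (by positivity : 0 ≤ a / 2)
    have := hKa t ht
    simp only [hD]
    linarith
  have hBb : ∀ t, 0 ≤ t → -(a * M' * V) ≤ B t := by
    intro t ht
    have : ∫ x in Ω, -(a * M') * 1 ≤ B t := by
      refine setIntegral_mono_on ((II continuous_const).const_mul _)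
        (II (((hϱt t).add hs1.continuous).mul hf1.continuous)) hΩo.measurableSet fun x hx => ?_
      have h1 : |f x| ≤ M' := (hM x hx).1.trans (le_max_left _ _)
      have h2 := hbd t ht x hx
      have h3 : |ϱ t x + ρs x| ≤ a := by
        rw [abs_of_nonneg (hα₁.le.trans h2.1)]
        exact h2.2.trans (le_max_left _ _)
      have h4 : |(ϱ t x + ρs x) * f x| ≤ a * M' := by
        rw [abs_mul]
        exact mul_le_mul h3 h1 (abs_nonneg _) ha0.le
      linarith [(abs_le.1 h4).1]
    rw [integral_const_mul] at this
    linarith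
  have hlow : ∀ t, 0 ≤ t → -(a * M' * V) ≤ K t + B t := fun t ht => by
    linarith [hBb t ht, hK0 t ht]
  have hE0 : ∀ t, 0 ≤ t → K t + B t ≤ K 0 + B 0 := by
    intro t ht
    have hanti : AntitoneOn (fun t => K t + B t) (Ici 0) :=
      antitoneOn_of_deriv_nonpos (convex_Ici 0)
        (fun r hr => (hEd r hr).continuousAt.continuousWithinAt)
        (fun r hr => (hEd r (interior_subset hr)).differentiableAt.differentiableWithinAt)
        (fun r hr => by
          rw [(hEd r (interior_subset hr)).deriv]
          have := mul_nonneg hν.le (hD0 r)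
          linarith)
    exact hanti (mem_Ici.2 le_rfl) ht ht
  set Kmax := K 0 + B 0 + a * M' * V with hKmax
  have hKle : ∀ t, 0 ≤ t → K t ≤ Kmax := fun t ht => by linarith [hE0 t ht, hBb t ht]
  have hKmax0 : 0 ≤ Kmax := (hK0 0 le_rfl).trans (hKle 0 le_rfl)
  have hWb : ∀ t, 0 ≤ t → -W t ≤ a * M' * (V + 2 * Kmax / α₁) := by
    intro t ht
    have h0 : ∫ x in Ω, -(a * M') * (1 + ‖u t x‖ ^ 2) ≤ W t := by
      refine setIntegral_mono_on (((II continuous_const).add (iu2 t)).const_mul _)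
        (II (((hϱt t).add hs1.continuous).mul ((hf1.continuous_fderiv (by simp)).clm_apply
          (hu1 t).continuous))) hΩo.measurableSet fun x hx => ?_
      have h1 : ‖gradient f x‖ ≤ M' := (hM x hx).2.1.trans (le_max_left _ _)
      have h2 := hbd t ht x hx
      have h3 : |ϱ t x + ρs x| ≤ a := by
        rw [abs_of_nonneg (hα₁.le.trans h2.1)]
        exact h2.2.trans (le_max_left _ _)
      have h5 : |fderiv ℝ f x (u t x)| ≤ M' * (1 + ‖u t x‖ ^ 2) := by
        rw [← inner_gradient_eq]
        have h6 := abs_real_inner_le_norm (u t x) (gradient f x)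
        have h7 : ‖u t x‖ ≤ 1 + ‖u t x‖ ^ 2 := by nlinarith [sq_nonneg (‖u t x‖ - 1)]
        have h8 := mul_le_mul h7 h1 (norm_nonneg _) (by positivity)
        linarith
      have h4 : |(ϱ t x + ρs x) * fderiv ℝ f x (u t x)| ≤ a * (M' * (1 + ‖u t x‖ ^ 2)) := by
        rw [abs_mul]
        exact mul_le_mul h3 h5 (abs_nonneg _) ha0.le
      linarith [(abs_le.1 h4).1]
    rw [integral_const_mul, integral_add (II continuous_const) (iu2 t)] at h0
    have h1 : ∫ x in Ω, ‖u t x‖ ^ 2 ≤ 2 * Kmax / α₁ := by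
      rw [le_div_iff₀ hα₁]
      linarith [huK t ht, hKle t ht]
    have h2 := mul_le_mul_of_nonneg_left h1 (by positivity : 0 ≤ a * M')
    linarith
  obtain ⟨hKlim, L, hL0, hL⟩ := tendsto_zero_of_dissipation (K := K) (E := fun t => K t + B t)
    (c := ν / (a / 2 * Cp)) (C := a * M' * (V + 2 * Kmax / α₁) + 1) (m := -(a * M' * V))
    (by positivity) (by positivity) hK0 hkin hEd
    (fun t ht => by
      have h1 := hWb t ht
      have h2 := mul_nonneg hν.le (hD0 t)
      simp only [hD, hW] at h1 h2
      linarith)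
    (fun t ht => by
      have h1 := mul_le_mul_of_nonneg_left (hKD t ht)
        (by positivity : 0 ≤ ν / (a / 2 * Cp))
      have h2 : ν / (a / 2 * Cp) * (a / 2 * Cp * D t) = ν * D t := by field_simp
      linarith)
    hlow
  have hBlim : Tendsto B atTop (𝓝 L) := by
    have := hL.sub hKlim
    simpa using this
  set S : ℝ := ∫ x in Ω, ρs x * f x with hS
  have hA : ∀ t, ∫ x in Ω, ϱ t x * f x = B t - S := by
    intro t
    have c1 := hϱt t
    have c2 := hs1.continuous
    have c3 := hf1.continuous
    rw [hB, hS]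
    simp only
    rw [← integral_sub (II (by fun_prop)) (II (by fun_prop))]
    congr 1
    ext x
    ring
  set N : ℝ → ℝ := fun t => ∫ x in Ω, (ϱ t x + ρs x + γ * f x - β) ^ 2 with hN
  have hNconst : ∀ t, 0 ≤ t → N t - 2 * γ * B t = N 0 - 2 * γ * B 0 := by
    have hsplit : ∀ t, N t - 2 * γ * B t =
        (∫ x in Ω, ((ϱ t x + ρs x) ^ 2 - 2 * β * (ϱ t x + ρs x)) * 1)
          + ∫ x in Ω, (γ * f x - β) ^ 2 := by
      intro t
      have c1 := (hϱt t).add hs1.continuous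
      have c2 := hf1.continuous
      rw [hN, hB]
      simp only
      rw [← integral_const_mul, ← integral_sub (II (by fun_prop)) (II (by fun_prop)),
        ← integral_add (II (by fun_prop)) (II (by fun_prop))]
      congr 1
      ext x
      ring
    intro t ht
    rw [hsplit t, hsplit 0]
    congr 1
    refine eq_initial_of_hasDerivAt_zero (F := fun t =>
      ∫ x in Ω, ((ϱ t x + ρs x) ^ 2 - 2 * β * (ϱ t x + ρs x)) * 1) (fun r hr => ?_) ht
    simpa using hden r hr (fun s => s ^ 2 - 2 * β * s) (by fun_prop) _
      (contDiff_const (c := (1 : ℝ)))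
  have hNlim : Tendsto N atTop (𝓝 (N 0 - 2 * γ * B 0 + 2 * γ * L)) := by
    refine ((hBlim.const_mul (2 * γ)).const_add (N 0 - 2 * γ * B 0)).congr' ?_
    filter_upwards [eventually_ge_atTop 0] with t ht
    linarith [hNconst t ht]
  have hL0' : L ≤ (∫ x in Ω, (ϱ 0 x + ρs x) * ‖u 0 x‖ ^ 2) / 2 + B 0 := hL0
  refine ⟨L - S, N 0 - 2 * γ * B 0 + 2 * γ * L, ?_, hNlim, ?_, ?_, ?_, ?_⟩
  · simp only [hA]
    exact hBlim.sub_const S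
  · rw [hA]
    linarith
  · exact ge_of_tendsto' hNlim fun t => integral_nonneg fun x => by positivity
  · have := mul_le_mul_of_nonneg_left hL0' (by positivity : 0 ≤ 2 * γ)
    change N 0 - 2 * γ * B 0 + 2 * γ * L ≤ _ + N 0
    linarith
  · rw [hA]
    change N 0 - (N 0 - 2 * γ * B 0 + 2 * γ * L) = _
    ring
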